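/- Let N be a matching in G that admits a 2-level witness. Then every (A'∪B')-complete matching in G'_N has weight at most 0; in particular, N is a popular matching in G. -/

import Mathlib

/-!
The weight bound is linear-programming duality. A clone unmatched in `N'` gets the dual value `0`;
a matched clone gets `+1` if it lies in `A'₀ ∪ B'₁` and `-1` if it lies in `A'₁ ∪ B'₀`. The values at
the two ends of an edge of `N'` cancel, so all the values sum to `0`; the witness conditions
ensure that every edge of `G'_N`, last-resort edges included, weighs at most the sum of the dual
values it covers (`dual_edge_le`). Summing over a complete matching gives `wtTotal_nonpos`.

For popularity, every matching `T` of `G` is lifted to a complete matching of `G'_N` of weight exactly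
`-Δ(N,T)` (`exists_cloneMatching`). The lift is built at each vertex `u` separately
(`exists_slots`): the clones of `u` are slots filled by `N(u)`. Elements of `N(u) ∩ T(u)` keep their
slots, and an optimal permutation in the definition of `δ_u(N(u),T(u))` tells into which slot each
element of `T(u) ∖ N(u)` goes; elements compared with null go to empty slots, of which there are
enough by the capacity bound. Keeping common elements in place ensures that an edge of `N ∩ T` is
lifted to its copy in `N'`, the only one present in `G'_N`.
-/

/-!
Many-to-many matchings with two-sided preferences, votes, and popularity,
following "Popular Matchings in the Many-to-Many Setting".
-/

/-- The vote of a vertex with rank function `r` (smaller rank = more preferred)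
comparing two options, where `none` stands for `null` (ranked below everything). -/
def vote {β : Type*} [DecidableEq β] (r : β → ℕ) : Option β → Option β → ℤ
  | none, none => 0
  | some _, none => 1
  | none, some _ => -1
  | some x, some y => if x = y then 0 else if r x < r y then 1 else -1

/-- The common length `k` of the arrays compared in `δ_u(S₀,S₁)`:
after padding the smaller of `S₀, S₁` with nulls and removing common elements. -/
def kOf {β : Type*} [DecidableEq β] (S₀ S₁ : Finset β) : ℕ :=
  max S₀.card S₁.card - (S₀ ∩ S₁).card

/-- `S₀ ∖ S₁`, viewed as an array of `Option`s padded with `none` (null) to length `k`. -/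
noncomputable def padded {β : Type*} [DecidableEq β] (S₀ S₁ : Finset β) (k : ℕ) : List (Option β) :=
  ((S₀ \ S₁).toList.map some) ++ List.replicate (k - (S₀ \ S₁).card) none

/-- `δ_u(S₀,S₁)`: the minimum, over all permutations `σ` of `{1,…,k}`, of
`Σ_i vote_u(S'₀[i], S'₁[σ(i)])`. -/
noncomputable def deltaSet {β : Type*} [DecidableEq β] (r : β → ℕ) (S₀ S₁ : Finset β) : ℤ :=
  Finset.univ.inf' ⟨1, Finset.mem_univ 1⟩ fun σ : Equiv.Perm (Fin (kOf S₀ S₁)) =>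
    ∑ i : Fin (kOf S₀ S₁),
      vote r ((padded S₀ S₁ (kOf S₀ S₁)).getD (i : ℕ) none)
             ((padded S₁ S₀ (kOf S₀ S₁)).getD (σ i : ℕ) none)

/-- A bipartite instance `G = (A ∪ B, E)` with capacities `≥ 1` and strict
preferences of every vertex over its neighbors (given by injective-on-neighbors
rank functions; smaller rank = more preferred). -/
structure PrefInstance (α β : Type*) [Fintype α] [Fintype β] [DecidableEq α] [DecidableEq β] where
  E : Finset (α × β)
  capA : α → ℕ
  capB : β → ℕ
  rankA : α → β → ℕ
  rankB : β → α → ℕ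
  capA_pos : ∀ a, 1 ≤ capA a
  capB_pos : ∀ b, 1 ≤ capB b
  rankA_injOn : ∀ a, Set.InjOn (rankA a) {b | (a, b) ∈ E}
  rankB_injOn : ∀ b, Set.InjOn (rankB b) {a | (a, b) ∈ E}

namespace PrefInstance

variable {α β : Type*} [Fintype α] [Fintype β] [DecidableEq α] [DecidableEq β]

/-- `M(a)`: the set of `B`-vertices matched to `a` in `M`. -/
def rowSet (M : Finset (α × β)) (a : α) : Finset β :=
  Finset.univ.filter fun b => (a, b) ∈ M

/-- `M(b)`: the set of `A`-vertices matched to `b` in `M`. -/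
def colSet (M : Finset (α × β)) (b : β) : Finset α :=
  Finset.univ.filter fun a => (a, b) ∈ M

variable (I : PrefInstance α β)

/-- `M` is a matching in `G`: a subset of `E` respecting all capacities. -/
def IsMatching (M : Finset (α × β)) : Prop :=
  M ⊆ I.E ∧ (∀ a, (rowSet M a).card ≤ I.capA a) ∧ (∀ b, (colSet M b).card ≤ I.capB b)

/-- `Δ_a(M₀,M₁) = δ_a(M₀(a), M₁(a))` for `a ∈ A`. -/
noncomputable def DeltaA (M₀ M₁ : Finset (α × β)) (a : α) : ℤ :=
  deltaSet (I.rankA a) (rowSet M₀ a) (rowSet M₁ a)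

/-- `Δ_b(M₀,M₁) = δ_b(M₀(b), M₁(b))` for `b ∈ B`. -/
noncomputable def DeltaB (M₀ M₁ : Finset (α × β)) (b : β) : ℤ :=
  deltaSet (I.rankB b) (colSet M₀ b) (colSet M₁ b)

/-- `Δ(M₀,M₁) = Σ_{u ∈ A∪B} Δ_u(M₀,M₁)`. -/
noncomputable def Delta (M₀ M₁ : Finset (α × β)) : ℤ :=
  (∑ a, I.DeltaA M₀ M₁ a) + ∑ b, I.DeltaB M₀ M₁ b

/-- `M` is a popular matching: `Δ(M,T) ≥ 0` against every matching `T`. -/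
def Popular (M : Finset (α × β)) : Prop :=
  I.IsMatching M ∧ ∀ T, I.IsMatching T → 0 ≤ I.Delta M T

/-- `M` is a weakly popular matching: `Δ(T,M) ≤ 0` for every matching `T`. -/
def WeaklyPopular (M : Finset (α × β)) : Prop :=
  I.IsMatching M ∧ ∀ T, I.IsMatching T → I.Delta T M ≤ 0

/-- The edge `(a,b) ∈ E ∖ M` blocks `M`. -/
def Blocks (M : Finset (α × β)) (a : α) (b : β) : Prop :=
  (a, b) ∈ I.E ∧ (a, b) ∉ M ∧
  ((rowSet M a).card < I.capA a ∨ ∃ b' ∈ rowSet M a, I.rankA a b < I.rankA a b') ∧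
  ((colSet M b).card < I.capB b ∨ ∃ a' ∈ colSet M b, I.rankB b a < I.rankB b a')

/-- `M` is a pairwise-stable matching: no edge blocks it. -/
def Stable (M : Finset (α × β)) : Prop :=
  I.IsMatching M ∧ ∀ a b, ¬ I.Blocks M a b

end PrefInstance
namespace PrefInstance

variable {α β : Type*} [Fintype α] [Fintype β] [DecidableEq α] [DecidableEq β]
variable (I : PrefInstance α β)

/-- `A'`: the set of clones `a_i`, `1 ≤ i ≤ cap(a)`, of the vertices of `A`. -/
abbrev CloneA := (a : α) × Fin (I.capA a)

/-- `B'`: the set of clones `b_j`, `1 ≤ j ≤ cap(b)`, of the vertices of `B`. -/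
abbrev CloneB := (b : β) × Fin (I.capB b)

/-- `N'` is a realization of the matching `N` on the cloned vertex sets: a
(one-to-one) matching on `A' × B'` whose projection is a bijection onto `N`. -/
def IsRealization (N : Finset (α × β)) (N' : Finset (I.CloneA × I.CloneB)) : Prop :=
  (∀ e ∈ N', ∀ f ∈ N', e.1 = f.1 → e = f) ∧
  (∀ e ∈ N', ∀ f ∈ N', e.2 = f.2 → e = f) ∧
  N'.image (fun e => (e.1.1, e.2.1)) = N ∧
  N'.card = N.card

/-- The partner of `x ∈ A'` in a one-to-one matching `N'` on clones (`none` if unmatched,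
i.e. matched to the last resort `ℓ(x)` in `N*`). -/
noncomputable def partnerA (N' : Finset (I.CloneA × I.CloneB)) (x : I.CloneA) :
    Option I.CloneB :=
  if h : ∃ y, (x, y) ∈ N' then some h.choose else none

/-- The partner of `y ∈ B'` in a one-to-one matching `N'` on clones (`none` if unmatched). -/
noncomputable def partnerB (N' : Finset (I.CloneA × I.CloneB)) (y : I.CloneB) :
    Option I.CloneA :=
  if h : ∃ x, (x, y) ∈ N' then some h.choose else none

/-- `(x, y) ∈ A' × B'` is an edge of the graph `G'_N`: either the underlying pair is an
edge of `E ∖ N` (all clone copies present), or `(x,y)` is the unique copy in `N'` of an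
edge of `N`. -/
def GNEdge (N : Finset (α × β)) (N' : Finset (I.CloneA × I.CloneB))
    (x : I.CloneA) (y : I.CloneB) : Prop :=
  ((x.1, y.1) ∈ I.E ∧ (x.1, y.1) ∉ N) ∨ (x, y) ∈ N'

/-- The weight `wt_N(x,y) = vote_a(b, N*(a_i)) + vote_b(a, N*(b_j))` of an edge of `G'_N`
lying in `A' × B'` (a last-resort partner in `N*` is read as null). -/
noncomputable def wtE (N' : Finset (I.CloneA × I.CloneB))
    (x : I.CloneA) (y : I.CloneB) : ℤ :=
  vote (I.rankA x.1) (some y.1) (Option.map Sigma.fst (I.partnerA N' x)) +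
  vote (I.rankB y.1) (some x.1) (Option.map Sigma.fst (I.partnerB N' y))

/-- A one-to-one matching on the clone sets (each clone is in at most one edge).
Together with the implicit last-resort edges for unmatched clones, this represents
an `(A' ∪ B')`-complete matching in `G'_N`. -/
def IsCloneMatching (T' : Finset (I.CloneA × I.CloneB)) : Prop :=
  (∀ e ∈ T', ∀ f ∈ T', e.1 = f.1 → e = f) ∧ (∀ e ∈ T', ∀ f ∈ T', e.2 = f.2 → e = f)

/-- The weight `wt_N` of the `(A' ∪ B')`-complete matching represented by `T'`:
the sum of the weights of its `A' × B'` edges plus, for every clone left unmatched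
in `T'` (hence matched to its last resort), the weight `wt_N(v, ℓ(v))`, which is
`-1` if `v` is matched in `N'` and `0` otherwise. -/
noncomputable def wtTotal (N' T' : Finset (I.CloneA × I.CloneB)) : ℤ :=
  (∑ e ∈ T', I.wtE N' e.1 e.2) +
  (∑ x : I.CloneA,
    if ∀ y, (x, y) ∉ T' then (if ∃ y, (x, y) ∈ N' then (-1 : ℤ) else 0) else 0) +
  (∑ y : I.CloneB,
    if ∀ x, (x, y) ∉ T' then (if ∃ x, (x, y) ∈ N' then (-1 : ℤ) else 0) else 0)

/-- A 2-level witness for `N` (with realization `N'`): partitions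
`A' = A'₀ ∪ A'₁` and `B' = B'₀ ∪ B'₁` (encoded by level functions `lA, lB`, where
`true` means level 1) such that clones of `A'` unmatched in `N'` are in `A'₁`, clones
of `B'` unmatched in `N'` are in `B'₀`, `N' ⊆ (A'₀ × B'₀) ∪ (A'₁ × B'₁)`, every edge
of `G'_N` in `A'₁ × B'₀` has weight `-2`, and every edge of `G'_N` in
`(A'₀ × B'₀) ∪ (A'₁ × B'₁)` has weight `≤ 0`. -/
def TwoLevelWitness (N : Finset (α × β)) (N' : Finset (I.CloneA × I.CloneB))
    (lA : I.CloneA → Bool) (lB : I.CloneB → Bool) : Prop :=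
  (∀ x : I.CloneA, (∀ y, (x, y) ∉ N') → lA x = true) ∧
  (∀ y : I.CloneB, (∀ x, (x, y) ∉ N') → lB y = false) ∧
  (∀ e ∈ N', lA e.1 = lB e.2) ∧
  (∀ x y, I.GNEdge N N' x y → lA x = true → lB y = false → I.wtE N' x y = -2) ∧
  (∀ x y, I.GNEdge N N' x y → lA x = lB y → I.wtE N' x y ≤ 0)

end PrefInstance
/-! ### Sums over matched and unmatched vertices, and votes -/

section Helpers

/-- Splitting a sum over `X` into the part matched by `T` (summed over edges) and the rest. -/
theorem sum_matched_add_unmatched {X Y : Type*} [Fintype X] [DecidableEq X] (T : Finset (X × Y))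
    (h : ∀ e ∈ T, ∀ f ∈ T, e.1 = f.1 → e = f)
    [∀ x : X, Decidable (∀ y, (x, y) ∉ T)] (g : X → ℤ) :
    ∑ e ∈ T, g e.1 + ∑ x, (if ∀ y, (x, y) ∉ T then g x else 0) = ∑ x, g x := by
  have h1 : ∑ e ∈ T, g e.1 = ∑ x ∈ T.image Prod.fst, g x := by
    rw [Finset.sum_image]
    intro e he f hf hef
    exact h e he f hf hef
  have h2 : ∑ x ∈ T.image Prod.fst, g x
      = ∑ x, (if x ∈ T.image Prod.fst then g x else 0) := by
    simp [Finset.sum_ite_mem]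
  rw [h1, h2, ← Finset.sum_add_distrib]
  refine Finset.sum_congr rfl fun x _ => ?_
  by_cases hx : x ∈ T.image Prod.fst
  · have : ¬ ∀ y, (x, y) ∉ T := by
      obtain ⟨⟨x', y⟩, he, rfl⟩ := Finset.mem_image.1 hx
      exact fun hy => hy y he
    simp only [if_pos hx, if_neg this, add_zero]
  · have : ∀ y, (x, y) ∉ T := fun y hy => hx (Finset.mem_image.2 ⟨_, hy, rfl⟩)
    simp only [if_neg hx, if_pos this, zero_add]

/-- The second-coordinate version of `sum_matched_add_unmatched`. -/
theorem sum_matched_add_unmatched' {X Y : Type*} [Fintype Y] [DecidableEq Y]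
    (T : Finset (X × Y))
    (h : ∀ e ∈ T, ∀ f ∈ T, e.2 = f.2 → e = f)
    [∀ y : Y, Decidable (∀ x, (x, y) ∉ T)] (g : Y → ℤ) :
    ∑ e ∈ T, g e.2 + ∑ y, (if ∀ x, (x, y) ∉ T then g y else 0) = ∑ y, g y := by
  have h1 : ∑ e ∈ T, g e.2 = ∑ x ∈ T.image Prod.snd, g x := by
    rw [Finset.sum_image]
    intro e he f hf hef
    exact h e he f hf hef
  have h2 : ∑ x ∈ T.image Prod.snd, g x
      = ∑ x, (if x ∈ T.image Prod.snd then g x else 0) := by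
    simp [Finset.sum_ite_mem]
  rw [h1, h2, ← Finset.sum_add_distrib]
  refine Finset.sum_congr rfl fun y _ => ?_
  by_cases hx : y ∈ T.image Prod.snd
  · have : ¬ ∀ x, (x, y) ∉ T := by
      obtain ⟨⟨x', y⟩, he, rfl⟩ := Finset.mem_image.1 hx
      exact fun hy => hy x' he
    simp only [if_pos hx, if_neg this, add_zero]
  · have : ∀ x, (x, y) ∉ T := fun x hy => hx (Finset.mem_image.2 ⟨_, hy, rfl⟩)
    simp only [if_neg hx, if_pos this, zero_add]

theorem vote_antisymm {β : Type*} [DecidableEq β] (r : β → ℕ) (s : Set β) (hr : Set.InjOn r s)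
    (x y : Option β) (hx : ∀ b, x = some b → b ∈ s) (hy : ∀ b, y = some b → b ∈ s) :
    vote r x y = - vote r y x := by
  rcases x with _ | x <;> rcases y with _ | y <;> simp only [vote] <;> try norm_num
  by_cases hxy : x = y
  · simp [hxy]
  · have : r x ≠ r y := fun h => hxy (hr (hx x rfl) (hy y rfl) h)
    rw [if_neg hxy, if_neg (Ne.symm hxy)]
    split_ifs <;> omega

theorem vote_le_one {β : Type*} [DecidableEq β] (r : β → ℕ) (x y : Option β) :
    vote r x y ≤ 1 := by
  rcases x with _ | x <;> rcases y with _ | y <;> simp only [vote] <;> try norm_num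
  split_ifs <;> norm_num

theorem vote_self {β : Type*} [DecidableEq β] (r : β → ℕ) (x : Option β) : vote r x x = 0 := by
  cases x <;> simp [vote]

/-- A function factors through another by an injection as soon as no fiber is larger. -/
theorem exists_injective_factor {ι κ γ : Type*} [Fintype ι] [Fintype κ] [DecidableEq γ]
    (u : ι → γ) (p : κ → γ)
    (h : ∀ z, (Finset.univ.filter fun i => u i = z).card
      ≤ (Finset.univ.filter fun j => p j = z).card) :
    ∃ f : ι → κ, Function.Injective f ∧ ∀ i, p (f i) = u i := by
  have h' : ∀ z, Nonempty ({i // u i = z} ↪ {j // p j = z}) := fun z => by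
    classical
    apply Function.Embedding.nonempty_of_card_le
    simpa [Fintype.card_subtype] using h z
  let g := fun z => (h' z).some
  refine ⟨fun i => (g (u i) ⟨i, rfl⟩).1, ?_, fun i => (g (u i) ⟨i, rfl⟩).2⟩
  have key : ∀ z i j (hi : u i = z) (hj : u j = z),
      ((g z ⟨i, hi⟩ : {j // p j = z}) : κ) = g z ⟨j, hj⟩ → i = j := by
    intro z i j hi hj hij
    have := (g z).injective (Subtype.ext hij)
    exact congrArg Subtype.val this
  intro i j hij
  have huij : u i = u j := by
    rw [← (g (u i) ⟨i, rfl⟩).2, ← (g (u j) ⟨j, rfl⟩).2]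
    exact congrArg p hij
  have e : ∀ z (hz : u j = z), ((g (u j) ⟨j, rfl⟩ : {k // p k = u j}) : κ) = g z ⟨j, hz⟩ := by
    rintro z rfl; rfl
  refine key (u i) i j rfl huij.symm ?_
  rw [← e]
  exact hij

/-! ### The padded arrays -/

theorem card_sdiff_le_kOf {β : Type*} [DecidableEq β] (S₀ S₁ : Finset β) :
    (S₀ \ S₁).card ≤ kOf S₀ S₁ := by
  have := Finset.card_sdiff_add_card_inter S₀ S₁
  unfold kOf
  omega

theorem kOf_comm {β : Type*} [DecidableEq β] (S₀ S₁ : Finset β) : kOf S₀ S₁ = kOf S₁ S₀ := by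
  unfold kOf
  rw [max_comm, Finset.inter_comm]

/-- The number of occurrences of `z` in the padded array, indexed by `Fin k`. -/
theorem card_padded {β : Type*} [DecidableEq β] (S₀ S₁ : Finset β) (k : ℕ)
    (hk : (S₀ \ S₁).card ≤ k) (z : Option β) :
    (Finset.univ.filter fun i : Fin k => (padded S₀ S₁ k).getD (i : ℕ) none = z).card
      = (padded S₀ S₁ k).count z := by
  have hl : (padded S₀ S₁ k).length = k := by
    simp [padded]; omega
  have h1 : List.ofFn (fun i : Fin k => (padded S₀ S₁ k).getD (i : ℕ) none)
      = padded S₀ S₁ k := by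
    apply List.ext_getElem
    · simp [hl]
    · intro i hi hi'
      simp [hi']
  conv_rhs => rw [← h1]
  rw [List.ofFn_eq_map, List.count, List.countP_map, Finset.card_def, Finset.filter_val,
    ← Multiset.countP_eq_card_filter]
  change Multiset.countP _ ((List.finRange k : List (Fin k)) : Multiset (Fin k)) = _
  rw [Multiset.coe_countP]
  congr 1
  funext b
  simp [Bool.beq_eq_decide_eq]

theorem count_padded_some {β : Type*} [DecidableEq β] (S₀ S₁ : Finset β) (k : ℕ) (n : β) :
    (padded S₀ S₁ k).count (some n) = if n ∈ S₀ \ S₁ then 1 else 0 := by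
  rw [padded, List.count_append, List.count_map_of_injective _ _ (Option.some_injective β),
    List.count_replicate, (Finset.nodup_toList _).count]
  simp

theorem count_padded_none {β : Type*} [DecidableEq β] (S₀ S₁ : Finset β) (k : ℕ) :
    (padded S₀ S₁ k).count none = k - (S₀ \ S₁).card := by
  rw [padded, List.count_append, List.count_replicate_self, List.count_eq_zero_of_not_mem]
  · simp
  · simp

/-! ### Refilling the slots of one vertex -/

/-- `p` assigns the elements of `S` bijectively to some of the `c` slots; the other slots
are empty (`none`). -/
def Fills {β : Type*} {c : ℕ} (p : Fin c → Option β) (S : Finset β) : Prop :=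
  (∀ i j n, p i = some n → p j = some n → i = j) ∧ ∀ n, n ∈ S ↔ ∃ i, p i = some n

theorem Fills.card_none {β : Type*} [DecidableEq β] {c : ℕ} {p : Fin c → Option β} {S : Finset β}
    (h : Fills p S) : (Finset.univ.filter fun j => p j = none).card = c - S.card := by
  have h1 : (Finset.univ.filter fun j => p j ≠ none).card = S.card := by
    refine Finset.card_bij (fun j hj => (p j).get (Option.isSome_iff_ne_none.2 (by simpa using hj)))
      ?_ ?_ ?_
    · intro j hj
      exact (h.2 _).2 ⟨j, by simp⟩
    · intro i hi j hj hij
      refine h.1 i j _ (Option.some_get (Option.isSome_iff_ne_none.2 (by simpa using hi))).symm ?_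
      rw [hij]; simp
    · intro n hn
      obtain ⟨i, hi⟩ := (h.2 n).1 hn
      exact ⟨i, by simp [hi], by simp [hi]⟩
  have h2 := Finset.card_filter_add_card_filter_not (s := (Finset.univ : Finset (Fin c)))
    (fun j => p j = none)
  simp only [Finset.card_univ, Fintype.card_fin] at h2
  have h3 : (Finset.univ.filter fun j => ¬ p j = none).card = S.card := h1
  omega

/-- The lift at a single vertex. If `p` fills `c` slots with `S₀`, the slots can be refilled with `S₁`
so that common elements keep their slots and the slotwise votes for the new filling against the old
one sum to `-δ(S₀,S₁)`. Strictness of the preferences on `s` is what makes votes antisymmetric. -/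
theorem exists_slots {β : Type*} [DecidableEq β] (r : β → ℕ) (S₀ S₁ : Finset β)
    (s : Set β) (hr : Set.InjOn r s) (hs₀ : ∀ b ∈ S₀, b ∈ s) (hs₁ : ∀ b ∈ S₁, b ∈ s)
    (c : ℕ) (hc₀ : S₀.card ≤ c) (hc : S₁.card ≤ c) (p : Fin c → Option β) (hp : Fills p S₀) :
    ∃ q : Fin c → Option β, Fills q S₁ ∧ (∀ i, ∀ n ∈ S₁, p i = some n → q i = some n) ∧
      ∑ i, vote r (q i) (p i) = - deltaSet r S₀ S₁ := by
  classical
  obtain ⟨σ, -, hσ⟩ := Finset.exists_mem_eq_inf' (s := Finset.univ) ⟨1, Finset.mem_univ 1⟩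
    (fun σ : Equiv.Perm (Fin (kOf S₀ S₁)) =>
    ∑ i : Fin (kOf S₀ S₁),
      vote r ((padded S₀ S₁ (kOf S₀ S₁)).getD (i : ℕ) none)
             ((padded S₁ S₀ (kOf S₀ S₁)).getD (σ i : ℕ) none))
  have hδ : deltaSet r S₀ S₁ = _ := hσ
  rw [hδ]
  clear hδ hσ
  have cu := card_padded S₀ S₁ _ (card_sdiff_le_kOf S₀ S₁)
  have cv := card_padded S₁ S₀ _ (kOf_comm S₀ S₁ ▸ card_sdiff_le_kOf S₁ S₀)
  set u : Fin (kOf S₀ S₁) → Option β := fun i => (padded S₀ S₁ (kOf S₀ S₁)).getD (i : ℕ) none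
  set v : Fin (kOf S₀ S₁) → Option β := fun i => (padded S₁ S₀ (kOf S₀ S₁)).getD (i : ℕ) none
  change ∀ z, (Finset.univ.filter fun i => u i = z).card = _ at cu
  change ∀ z, (Finset.univ.filter fun i => v i = z).card = _ at cv
  change ∃ q : Fin c → Option β, _ ∧ _ ∧ _ = - ∑ i, vote r (u i) (v (σ i))
  have hu : ∀ i n, u i = some n → n ∈ S₀ \ S₁ := by
    intro i n hi
    by_contra hn
    have := cu (some n)
    rw [count_padded_some, if_neg hn, Finset.card_eq_zero] at this
    exact Finset.notMem_empty i (this ▸ by simp [hi])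
  have hu' : ∀ n ∈ S₀ \ S₁, ∃ i, u i = some n := by
    intro n hn
    have := cu (some n)
    rw [count_padded_some, if_pos hn] at this
    obtain ⟨i, hi⟩ := Finset.card_pos.1 (this ▸ Nat.one_pos)
    exact ⟨i, by simpa using hi⟩
  have hv : ∀ i n, v i = some n → n ∈ S₁ \ S₀ := by
    intro i n hi
    by_contra hn
    have := cv (some n)
    rw [count_padded_some, if_neg hn, Finset.card_eq_zero] at this
    exact Finset.notMem_empty i (this ▸ by simp [hi])
  have hv' : ∀ n ∈ S₁ \ S₀, ∃ i, v i = some n := by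
    intro n hn
    have := cv (some n)
    rw [count_padded_some, if_pos hn] at this
    obtain ⟨i, hi⟩ := Finset.card_pos.1 (this ▸ Nat.one_pos)
    exact ⟨i, by simpa using hi⟩
  have hvinj : ∀ i j n, v i = some n → v j = some n → i = j := by
    intro i j n hi hj
    have h1 := cv (some n)
    rw [count_padded_some, if_pos (hv i n hi)] at h1
    exact Finset.card_le_one.1 h1.le i (by simp [hi]) j (by simp [hj])
  -- `f` places the array `u` on actual slots. There are enough empty slots for its null entries
  -- because `max |S₀| |S₁| ≤ c`.
  obtain ⟨f, finj, hf⟩ := exists_injective_factor u p (by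
    intro z
    rw [cu z]
    cases z with
    | none =>
      rw [count_padded_none, hp.card_none]
      have := Finset.card_sdiff_add_card_inter S₀ S₁
      unfold kOf
      omega
    | some n =>
      rw [count_padded_some]
      split_ifs with hn
      · obtain ⟨i, hi⟩ := (hp.2 n).1 (Finset.mem_sdiff.1 hn).1
        exact Finset.card_pos.2 ⟨i, by simp [hi]⟩
      · exact Nat.zero_le _)
  -- Common elements stay in place, the slots `f i` receive the array `v ∘ σ`,
  -- the remaining slots stay empty.
  let q : Fin c → Option β := fun j =>
    if ∃ n ∈ S₁, p j = some n then p j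
    else if h : ∃ i, f i = j then v (σ h.choose) else none
  have qkeep : ∀ i, ∀ n ∈ S₁, p i = some n → q i = some n := by
    intro i n hn hi
    have : ∃ n ∈ S₁, p i = some n := ⟨n, hn, hi⟩
    simp only [q, if_pos this, hi]
  have fnot : ∀ i, ¬ ∃ n ∈ S₁, p (f i) = some n := by
    rintro i ⟨n, hn, hi⟩
    rw [hf] at hi
    exact (Finset.mem_sdiff.1 (hu i n hi)).2 hn
  have qf : ∀ i, q (f i) = v (σ i) := by
    intro i
    have h : ∃ i', f i' = f i := ⟨i, rfl⟩
    have h' : h.choose = i := finj h.choose_spec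
    simp only [q, if_neg (fnot i), dif_pos h, h']
  -- Outside the range of `f`, the old and the new filling agree.
  have qout : ∀ j, (¬ ∃ i, f i = j) → q j = p j := by
    intro j hj
    by_cases h : ∃ n ∈ S₁, p j = some n
    · simp only [q, if_pos h]
    · simp only [q, if_neg h, dif_neg hj]
      rcases hpj : p j with _ | n
      · rfl
      · exfalso
        have hn0 : n ∈ S₀ := (hp.2 n).2 ⟨j, hpj⟩
        have hn1 : n ∉ S₁ := fun hn => h ⟨n, hn, hpj⟩
        obtain ⟨i, hi⟩ := hu' n (Finset.mem_sdiff.2 ⟨hn0, hn1⟩)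
        exact hj ⟨i, hp.1 _ _ n ((hf i).trans hi) hpj⟩
  have qcase : ∀ j n, q j = some n →
      (n ∈ S₁ ∧ n ∈ S₀ ∧ p j = some n) ∨ (n ∈ S₁ ∧ n ∉ S₀ ∧ ∃ i, f i = j ∧ v (σ i) = some n) := by
    intro j n hj
    by_cases h : ∃ i, f i = j
    · obtain ⟨i, rfl⟩ := h
      rw [qf] at hj
      have := Finset.mem_sdiff.1 (hv _ _ hj)
      exact Or.inr ⟨this.1, this.2, i, rfl, hj⟩
    · left
      have hpj : p j = some n := (qout j h) ▸ hj
      by_cases h' : ∃ n ∈ S₁, p j = some n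
      · obtain ⟨m, hm, hm'⟩ := h'
        obtain rfl : n = m := Option.some_injective _ (hpj.symm.trans hm')
        exact ⟨hm, (hp.2 n).2 ⟨j, hpj⟩, hpj⟩
      · simp only [q, if_neg h', dif_neg h] at hj
        cases hj
  refine ⟨q, ⟨?_, ?_⟩, qkeep, ?_⟩
  · intro i j n hi hj
    rcases qcase i n hi with ⟨-, h0, hi'⟩ | ⟨-, h0, i', rfl, hi'⟩ <;>
      rcases qcase j n hj with ⟨-, h0', hj'⟩ | ⟨-, h0', j', rfl, hj'⟩
    · exact hp.1 i j n hi' hj'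
    · exact absurd h0 h0'
    · exact absurd h0' h0
    · rw [σ.injective (hvinj _ _ n hi' hj')]
  · intro n
    constructor
    · intro hn
      by_cases h0 : n ∈ S₀
      · obtain ⟨i, hi⟩ := (hp.2 n).1 h0
        exact ⟨i, qkeep i n hn hi⟩
      · obtain ⟨i, hi⟩ := hv' n (Finset.mem_sdiff.2 ⟨hn, h0⟩)
        exact ⟨f (σ.symm i), by rw [qf, Equiv.apply_symm_apply, hi]⟩
    · rintro ⟨j, hj⟩
      rcases qcase j n hj with h | h <;> exact h.1
  · rw [← Finset.sum_neg_distrib]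
    have h1 : ∑ j, vote r (q j) (p j) = ∑ j ∈ Finset.univ.image f, vote r (q j) (p j) := by
      symm
      apply Finset.sum_subset (Finset.subset_univ _)
      intro j _ hj
      rw [qout j (by simpa using hj), vote_self]
    rw [h1, Finset.sum_image (fun _ _ _ _ h => finj h)]
    refine Finset.sum_congr rfl fun i _ => ?_
    rw [qf, hf]
    exact vote_antisymm r s hr _ _
      (fun b hb => hs₁ b (Finset.mem_sdiff.1 (hv _ b hb)).1)
      (fun b hb => hs₀ b (Finset.mem_sdiff.1 (hu _ b hb)).1)

end Helpers

/-! ### Realizations on clones -/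

namespace PrefInstance

variable {α β : Type*} [Fintype α] [Fintype β] [DecidableEq α] [DecidableEq β]
variable (I : PrefInstance α β)

theorem partnerA_eq_some {N' : Finset (I.CloneA × I.CloneB)}
    (h : ∀ e ∈ N', ∀ f ∈ N', e.1 = f.1 → e = f) (x : I.CloneA) (y : I.CloneB) :
    I.partnerA N' x = some y ↔ (x, y) ∈ N' := by
  unfold partnerA
  split_ifs with hx
  · constructor
    · intro e
      rw [← Option.some_injective _ e]; exact hx.choose_spec
    · intro hy
      exact congrArg some (congrArg Prod.snd (h _ hx.choose_spec _ hy rfl))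
  · simp only [false_iff]
    exact fun hy => hx ⟨y, hy⟩

theorem partnerB_eq_some {N' : Finset (I.CloneA × I.CloneB)}
    (h : ∀ e ∈ N', ∀ f ∈ N', e.2 = f.2 → e = f) (x : I.CloneA) (y : I.CloneB) :
    I.partnerB N' y = some x ↔ (x, y) ∈ N' := by
  unfold partnerB
  split_ifs with hx
  · constructor
    · intro e
      rw [← Option.some_injective _ e]; exact hx.choose_spec
    · intro hy
      exact congrArg some (congrArg Prod.fst (h _ hx.choose_spec _ hy rfl))
  · simp only [false_iff]
    exact fun hy => hx ⟨x, hy⟩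

/-- An edge of `N` has only one copy in `N'`. -/
theorem IsRealization.proj_inj {N : Finset (α × β)} {N' : Finset (I.CloneA × I.CloneB)}
    (h : I.IsRealization N N') {e f : I.CloneA × I.CloneB} (he : e ∈ N') (hf : f ∈ N')
    (h1 : e.1.1 = f.1.1) (h2 : e.2.1 = f.2.1) : e = f := by
  have hc : (N'.image (fun e => (e.1.1, e.2.1))).card = N'.card := by rw [h.2.2.1, h.2.2.2]
  exact Finset.card_image_iff.1 hc he hf (Prod.ext h1 h2)

theorem fillsA {N : Finset (α × β)} {N' : Finset (I.CloneA × I.CloneB)}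
    (h : I.IsRealization N N') (a : α) :
    Fills (fun i => Option.map Sigma.fst (I.partnerA N' ⟨a, i⟩)) (rowSet N a) := by
  simp only [Fills, Option.map_eq_some_iff, I.partnerA_eq_some h.1]
  constructor
  · rintro i j n ⟨y, hy, rfl⟩ ⟨y', hy', hyy⟩
    have := IsRealization.proj_inj I h hy hy' rfl hyy.symm
    simpa using congrArg Prod.fst this
  · intro n
    rw [rowSet, Finset.mem_filter, ← h.2.2.1]
    simp only [Finset.mem_univ, true_and, Finset.mem_image, Prod.mk.injEq]
    constructor
    · rintro ⟨⟨⟨a', i⟩, y⟩, he, rfl, rfl⟩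
      exact ⟨i, y, he, rfl⟩
    · rintro ⟨i, y, he, rfl⟩
      exact ⟨_, he, rfl, rfl⟩

theorem fillsB {N : Finset (α × β)} {N' : Finset (I.CloneA × I.CloneB)}
    (h : I.IsRealization N N') (b : β) :
    Fills (fun i => Option.map Sigma.fst (I.partnerB N' ⟨b, i⟩)) (colSet N b) := by
  simp only [Fills, Option.map_eq_some_iff, I.partnerB_eq_some h.2.1]
  constructor
  · rintro i j n ⟨y, hy, rfl⟩ ⟨y', hy', hyy⟩
    have := IsRealization.proj_inj I h hy hy' hyy.symm rfl
    simpa using congrArg Prod.snd this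
  · intro n
    rw [colSet, Finset.mem_filter, ← h.2.2.1]
    simp only [Finset.mem_univ, true_and, Finset.mem_image, Prod.mk.injEq]
    constructor
    · rintro ⟨⟨x, ⟨b', i⟩⟩, he, rfl, rfl⟩
      exact ⟨i, x, he, rfl⟩
    · rintro ⟨i, y, he, rfl⟩
      exact ⟨_, he, rfl, rfl⟩

/-! ### The dual bound -/

theorem wtE_le_two (N' : Finset (I.CloneA × I.CloneB)) (x : I.CloneA) (y : I.CloneB) :
    I.wtE N' x y ≤ 2 := by
  have h1 := vote_le_one (I.rankA x.1) (some y.1) (Option.map Sigma.fst (I.partnerA N' x))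
  have h2 := vote_le_one (I.rankB y.1) (some x.1) (Option.map Sigma.fst (I.partnerB N' y))
  unfold wtE
  omega

/-- Feasibility of the dual values on an edge `(x, y)` of weight `w`: here `P` and `Q` say that `x`
and `y` are unmatched in `N'`, and `l`, `m` are the levels of `x` and `y`. -/
theorem dual_edge_le (P Q : Prop) [Decidable P] [Decidable Q] (l m : Bool) (w : ℤ) (h2 : w ≤ 2)
    (hneg : l = true → m = false → w = -2) (hle : l = m → w ≤ 0)
    (hP : P → l = true) (hQ : Q → m = false) :
    w ≤ (if P then 0 else if l then -1 else 1) + (if Q then 0 else if m then 1 else -1) := by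
  cases l <;> cases m <;>
    simp only [reduceCtorEq, imp_false, forall_const, false_imp_iff, imp_true_iff,
      if_true, Bool.false_eq_true, if_false] at hneg hle hP hQ ⊢ <;>
    split_ifs <;> first | contradiction | omega

theorem wtTotal_nonpos (N : Finset (α × β))
    (N' : Finset (I.CloneA × I.CloneB)) (hN' : I.IsRealization N N')
    (lA : I.CloneA → Bool) (lB : I.CloneB → Bool)
    (hW : I.TwoLevelWitness N N' lA lB) (T' : Finset (I.CloneA × I.CloneB))
    (hT : I.IsCloneMatching T') (hG : ∀ e ∈ T', I.GNEdge N N' e.1 e.2) :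
    I.wtTotal N' T' ≤ 0 := by
  obtain ⟨hA, hB, hM, hneg, hle⟩ := hW
  let yA : I.CloneA → ℤ := fun x => if ∀ y, (x, y) ∉ N' then 0 else if lA x then -1 else 1
  let yB : I.CloneB → ℤ := fun y => if ∀ x, (x, y) ∉ N' then 0 else if lB y then 1 else -1
  have e1 := sum_matched_add_unmatched T' hT.1 yA
  have e2 := sum_matched_add_unmatched' T' hT.2 yB
  have e3 := sum_matched_add_unmatched N' hN'.1 yA
  have e4 := sum_matched_add_unmatched' N' hN'.2.1 yB
  have z3 : ∑ x, (if ∀ y, (x, y) ∉ N' then yA x else 0) = 0 := by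
    refine Finset.sum_eq_zero fun x _ => ?_
    split_ifs with h
    · simp only [yA, if_pos h]
    · rfl
  have z4 : ∑ y, (if ∀ x, (x, y) ∉ N' then yB y else 0) = 0 := by
    refine Finset.sum_eq_zero fun x _ => ?_
    split_ifs with h
    · simp only [yB, if_pos h]
    · rfl
  have z5 : ∑ e ∈ N', yA e.1 + ∑ e ∈ N', yB e.2 = 0 := by
    rw [← Finset.sum_add_distrib]
    refine Finset.sum_eq_zero fun e he => ?_
    have h1 : ¬ ∀ y, (e.1, y) ∉ N' := fun h => h e.2 he
    have h2 : ¬ ∀ x, (x, e.2) ∉ N' := fun h => h e.1 he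
    simp only [yA, yB, if_neg h1, if_neg h2, hM e he]
    split_ifs <;> rfl
  have i1 : ∑ e ∈ T', I.wtE N' e.1 e.2 ≤ ∑ e ∈ T', yA e.1 + ∑ e ∈ T', yB e.2 := by
    rw [← Finset.sum_add_distrib]
    refine Finset.sum_le_sum fun e he => ?_
    have g := hG e he
    have w2 := I.wtE_le_two N' e.1 e.2
    exact dual_edge_le _ _ _ _ _ w2 (hneg _ _ g) (hle _ _ g) (hA e.1) (hB e.2)
  have i2 : (∑ x : I.CloneA,
      if ∀ y, (x, y) ∉ T' then (if ∃ y, (x, y) ∈ N' then (-1 : ℤ) else 0) else 0)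
      ≤ ∑ x, (if ∀ y, (x, y) ∉ T' then yA x else 0) := by
    refine Finset.sum_le_sum fun x _ => ?_
    by_cases ht : ∀ y, (x, y) ∉ T'
    · simp only [if_pos ht, yA]
      by_cases hx : ∃ y, (x, y) ∈ N'
      · rw [if_pos hx, if_neg (by simpa using hx)]
        split_ifs <;> norm_num
      · rw [if_neg hx, if_pos (not_exists.1 hx)]
    · simp only [if_neg ht, le_refl]
  have i3 : (∑ y : I.CloneB,
      if ∀ x, (x, y) ∉ T' then (if ∃ x, (x, y) ∈ N' then (-1 : ℤ) else 0) else 0)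
      ≤ ∑ y, (if ∀ x, (x, y) ∉ T' then yB y else 0) := by
    refine Finset.sum_le_sum fun x _ => ?_
    by_cases ht : ∀ y, (y, x) ∉ T'
    · simp only [if_pos ht, yB]
      by_cases hx : ∃ y, (y, x) ∈ N'
      · rw [if_pos hx, if_neg (by simpa using hx)]
        split_ifs <;> norm_num
      · rw [if_neg hx, if_pos (not_exists.1 hx)]
    · simp only [if_neg ht, le_refl]
  unfold wtTotal
  linarith

/-! ### Lifting matchings of `G` to `G'_N` -/

/-- Every matching `T` of `G` lifts to a complete matching of `G'_N` of weight `-Δ(N,T)`. -/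
theorem exists_cloneMatching (N : Finset (α × β)) (hN : I.IsMatching N)
    (N' : Finset (I.CloneA × I.CloneB)) (hN' : I.IsRealization N N')
    (T : Finset (α × β)) (hT : I.IsMatching T) :
    ∃ T' : Finset (I.CloneA × I.CloneB), I.IsCloneMatching T' ∧
      (∀ e ∈ T', I.GNEdge N N' e.1 e.2) ∧ I.wtTotal N' T' = - I.Delta N T := by
  have hA := fun a => exists_slots (I.rankA a) (rowSet N a) (rowSet T a) _ (I.rankA_injOn a)
    (fun b hb => hN.1 (by simpa [rowSet] using hb)) (fun b hb => hT.1 (by simpa [rowSet] using hb))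
    (I.capA a) (hN.2.1 a) (hT.2.1 a) _ (I.fillsA hN' a)
  have hB := fun b => exists_slots (I.rankB b) (colSet N b) (colSet T b) _ (I.rankB_injOn b)
    (fun a ha => hN.1 (by simpa [colSet] using ha)) (fun a ha => hT.1 (by simpa [colSet] using ha))
    (I.capB b) (hN.2.2 b) (hT.2.2 b) _ (I.fillsB hN' b)
  choose qA fA kA sA using hA
  choose qB fB kB sB using hB
  -- The clones `a_i` and `b_j` are matched when `b` sits in slot `i` of `a` and `a` in slot `j` of `b`.
  let T' : Finset (I.CloneA × I.CloneB) := Finset.univ.filter fun e =>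
    qA e.1.1 e.1.2 = some e.2.1 ∧ qB e.2.1 e.2.2 = some e.1.1
  have memT : ∀ x y, (x, y) ∈ T' ↔ qA x.1 x.2 = some y.1 ∧ qB y.1 y.2 = some x.1 := by
    intro x y; simp [T']
  have rowcol : ∀ (M : Finset (α × β)) a b, b ∈ rowSet M a ↔ a ∈ colSet M b := by
    intro M a b; simp [rowSet, colSet]
  have hm : I.IsCloneMatching T' := by
    constructor
    · rintro ⟨x, ⟨b, j⟩⟩ he ⟨x', ⟨b', j'⟩⟩ hf h
      obtain rfl : x = x' := h
      rw [memT] at he hf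
      obtain rfl : b = b' := Option.some_injective _ (he.1.symm.trans hf.1)
      obtain rfl : j = j' := (fB b).1 _ _ _ he.2 hf.2
      rfl
    · rintro ⟨⟨a, i⟩, y⟩ he ⟨⟨a', i'⟩, y'⟩ hf h
      obtain rfl : y = y' := h
      rw [memT] at he hf
      obtain rfl : a = a' := Option.some_injective _ (he.2.symm.trans hf.2)
      obtain rfl : i = i' := (fA a).1 _ _ _ he.1 hf.1
      rfl
  refine ⟨T', hm, ?_, ?_⟩
  · rintro ⟨⟨a, i⟩, ⟨b, j⟩⟩ he
    rw [memT] at he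
    have hbT : b ∈ rowSet T a := ((fA a).2 b).2 ⟨i, he.1⟩
    have hab : (a, b) ∈ T := by simpa [rowSet] using hbT
    by_cases hn : (a, b) ∈ N
    · right
      rw [← hN'.2.2.1] at hn
      obtain ⟨⟨⟨a', i'⟩, ⟨b', j'⟩⟩, hf, hfe⟩ := Finset.mem_image.1 hn
      obtain ⟨rfl, rfl⟩ : a' = a ∧ b' = b := by simpa using hfe
      have h1 := kA a' i' b' hbT (by
        rw [Option.map_eq_some_iff]
        exact ⟨_, (I.partnerA_eq_some hN'.1 _ _).2 hf, rfl⟩)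
      have h2 := kB b' j' a' ((rowcol _ _ _).1 hbT) (by
        rw [Option.map_eq_some_iff]
        exact ⟨_, (I.partnerB_eq_some hN'.2.1 _ _).2 hf, rfl⟩)
      obtain rfl : i = i' := (fA a').1 _ _ _ he.1 h1
      obtain rfl : j = j' := (fB b').1 _ _ _ he.2 h2
      exact hf
    · exact Or.inl ⟨hT.1 hab, hn⟩
  · let gA : I.CloneA → ℤ := fun x => vote (I.rankA x.1) (qA x.1 x.2)
      (Option.map Sigma.fst (I.partnerA N' x))
    let gB : I.CloneB → ℤ := fun y => vote (I.rankB y.1) (qB y.1 y.2)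
      (Option.map Sigma.fst (I.partnerB N' y))
    have e1 := sum_matched_add_unmatched T' hm.1 gA
    have e2 := sum_matched_add_unmatched' T' hm.2 gB
    have s1 : ∑ x, gA x = - ∑ a, I.DeltaA N T a := by
      rw [Fintype.sum_sigma, ← Finset.sum_neg_distrib]
      exact Finset.sum_congr rfl fun a _ => sA a
    have s2 : ∑ y, gB y = - ∑ b, I.DeltaB N T b := by
      rw [Fintype.sum_sigma, ← Finset.sum_neg_distrib]
      exact Finset.sum_congr rfl fun b _ => sB b
    have w1 : ∑ e ∈ T', I.wtE N' e.1 e.2 = ∑ e ∈ T', gA e.1 + ∑ e ∈ T', gB e.2 := by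
      rw [← Finset.sum_add_distrib]
      refine Finset.sum_congr rfl fun e he => ?_
      have := (memT e.1 e.2).1 he
      simp only [wtE, gA, gB, this.1, this.2]
    have w2 : (∑ x : I.CloneA,
        if ∀ y, (x, y) ∉ T' then (if ∃ y, (x, y) ∈ N' then (-1 : ℤ) else 0) else 0)
        = ∑ x, (if ∀ y, (x, y) ∉ T' then gA x else 0) := by
      refine Finset.sum_congr rfl fun x _ => ?_
      by_cases ht : ∀ y, (x, y) ∉ T'
      · have hq : qA x.1 x.2 = none := by
          rcases hq : qA x.1 x.2 with _ | b
          · rfl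
          · have hb : b ∈ rowSet T x.1 := ((fA x.1).2 b).2 ⟨x.2, hq⟩
            obtain ⟨j, hj⟩ := ((fB b).2 x.1).1 ((rowcol _ _ _).1 hb)
            exact absurd ((memT x ⟨b, j⟩).2 ⟨hq, hj⟩) (ht _)
        simp only [if_pos ht, gA, hq]
        by_cases hx : ∃ y, (x, y) ∈ N'
        · rw [if_pos hx]
          obtain ⟨y, hy⟩ := hx
          simp [(I.partnerA_eq_some hN'.1 x y).2 hy, vote]
        · rw [if_neg hx]
          simp [partnerA, hx, vote]
      · simp only [if_neg ht]
    have w3 : (∑ y : I.CloneB,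
        if ∀ x, (x, y) ∉ T' then (if ∃ x, (x, y) ∈ N' then (-1 : ℤ) else 0) else 0)
        = ∑ y, (if ∀ x, (x, y) ∉ T' then gB y else 0) := by
      refine Finset.sum_congr rfl fun y _ => ?_
      by_cases ht : ∀ x, (x, y) ∉ T'
      · have hq : qB y.1 y.2 = none := by
          rcases hq : qB y.1 y.2 with _ | a
          · rfl
          · have ha : a ∈ colSet T y.1 := ((fB y.1).2 a).2 ⟨y.2, hq⟩
            obtain ⟨i, hi⟩ := ((fA a).2 y.1).1 ((rowcol _ _ _).2 ha)
            exact absurd ((memT ⟨a, i⟩ y).2 ⟨hi, hq⟩) (ht _)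
        simp only [if_pos ht, gB, hq]
        by_cases hx : ∃ x, (x, y) ∈ N'
        · rw [if_pos hx]
          obtain ⟨x, hx⟩ := hx
          simp [(I.partnerB_eq_some hN'.2.1 x y).2 hx, vote]
        · rw [if_neg hx]
          simp [partnerB, hx, vote]
      · simp only [if_neg ht]
    unfold wtTotal Delta
    rw [w1, w2, w3]
    linarith

end PrefInstance

/-- Let `N` be a matching in `G` (with realization `N'`) that admits a
2-level witness. Then every `(A' ∪ B')`-complete matching in `G'_N` has weight at most
0; in particular, `N` is a popular matching in `G`. -/
theorem statement7 {α β : Type*} [Fintype α] [Fintype β] [DecidableEq α] [DecidableEq β]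
    (I : PrefInstance α β) (N : Finset (α × β)) (hN : I.IsMatching N)
    (N' : Finset (I.CloneA × I.CloneB)) (hN' : I.IsRealization N N')
    (lA : I.CloneA → Bool) (lB : I.CloneB → Bool)
    (hW : I.TwoLevelWitness N N' lA lB) :
    (∀ T' : Finset (I.CloneA × I.CloneB),
      I.IsCloneMatching T' → (∀ e ∈ T', I.GNEdge N N' e.1 e.2) → I.wtTotal N' T' ≤ 0) ∧
    I.Popular N := by
  refine ⟨I.wtTotal_nonpos N N' hN' lA lB hW, hN, fun T hT => ?_⟩
  obtain ⟨T', hm, hG, hw⟩ := I.exists_cloneMatching N hN N' hN' T hT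
  have := I.wtTotal_nonpos N N' hN' lA lB hW T' hm hG
  linarith
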